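/- For every nonnegative integer n, there exist integers x, y, z, each relatively prime to 6, such that 24n + 9 = x² + 2y² + 6z². -/

import Mathlib

/-- The property that an integral ternary form takes only sums of three squares as values. -/
def TernarySums (a b c d e g : ℤ) : Prop :=
  ∀ x y z : ℤ, ∃ p q r : ℤ,
    a * x ^ 2 + b * y ^ 2 + c * z ^ 2 + 2 * d * y * z + 2 * e * x * z + 2 * g * x * y
      = p ^ 2 + q ^ 2 + r ^ 2

lemma exists_small_shift (A B : ℤ) (hA : 0 < A) :
    ∃ k : ℤ, -A ≤ 2 * (B + k * A) ∧ 2 * (B + k * A) ≤ A := by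
  refine ⟨-((2 * B + A) / (2 * A)), ?_⟩
  have h1 := Int.emod_add_mul_ediv (2 * B + A) (2 * A)
  have h2 := Int.emod_nonneg (2 * B + A) (b := 2 * A) (by omega)
  have h3 := Int.emod_lt_of_pos (2 * B + A) (b := 2 * A) (by omega)
  constructor <;> nlinarith

/-- A fully reduced form of determinant one is the sum of three squares. -/
lemma ternary_reduced (a b c d e g : ℤ) (ha : 0 < a) (hA : 0 < a * b - g ^ 2)
    (hdet : a * b * c + 2 * d * e * g - a * d ^ 2 - b * e ^ 2 - c * g ^ 2 = 1)
    (hB1 : -(a * b - g ^ 2) ≤ 2 * (a * d - e * g))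
    (hB2 : 2 * (a * d - e * g) ≤ (a * b - g ^ 2))
    (hg1 : -a ≤ 2 * g) (hg2 : 2 * g ≤ a) (he1 : -a ≤ 2 * e) (he2 : 2 * e ≤ a)
    (hab : a ≤ b) (hC : a * b - g ^ 2 ≤ a * c - e ^ 2) : TernarySums a b c d e g := by
  obtain ⟨A, hAe⟩ : ∃ A, A = a * b - g ^ 2 := ⟨_, rfl⟩
  obtain ⟨B, hBe⟩ : ∃ B, B = a * d - e * g := ⟨_, rfl⟩
  obtain ⟨C, hCe⟩ : ∃ C, C = a * c - e ^ 2 := ⟨_, rfl⟩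
  have hABC : A * C - B ^ 2 = a := by
    rw [hAe, hBe, hCe]; linear_combination a * hdet
  rw [← hAe] at hA hB1 hB2 hC
  rw [← hBe] at hB1 hB2
  rw [← hCe] at hC
  have h1 : 3 * A ^ 2 ≤ 4 * a := by nlinarith
  have h2 : 3 * a ^ 2 ≤ 4 * A := by nlinarith
  have ha1 : a = 1 := by
    by_contra hne
    have ha2 : 2 ≤ a := by omega
    have hA3 : A < a := by
      by_contra hcon
      have : a ≤ A := by omega
      nlinarith
    nlinarith
  subst ha1
  have hA1 : A = 1 := by nlinarith
  have hg : g = 0 := by omega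
  have he : e = 0 := by omega
  subst hg he
  subst hA1
  have hB : B = 0 := by omega
  have hd : d = 0 := by linarith
  have hb : b = 1 := by linarith
  subst hd hb
  have hc : c = 1 := by linarith
  subst hc
  intro x y z
  exact ⟨x, y, z, by ring⟩

lemma ternary_unimodular (N : ℕ) : ∀ (M : ℕ) (a b c d e g : ℤ), a = N → a * b - g ^ 2 = M →
    0 < a → 0 < a * b - g ^ 2 →
    a * b * c + 2 * d * e * g - a * d ^ 2 - b * e ^ 2 - c * g ^ 2 = 1 →
    TernarySums a b c d e g := by
  induction N using Nat.strong_induction_on with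
  | _ N ihN =>
  intro M
  induction M using Nat.strong_induction_on with
  | _ M ihM =>
  -- the case where all shifts have been made
  have key : ∀ (a b c d e g : ℤ), a = N → a * b - g ^ 2 = M →
      0 < a → 0 < a * b - g ^ 2 →
      a * b * c + 2 * d * e * g - a * d ^ 2 - b * e ^ 2 - c * g ^ 2 = 1 →
      -(a * b - g ^ 2) ≤ 2 * (a * d - e * g) →
      2 * (a * d - e * g) ≤ (a * b - g ^ 2) →
      -a ≤ 2 * g → 2 * g ≤ a → -a ≤ 2 * e → 2 * e ≤ a → TernarySums a b c d e g := by
    intro a b c d e g haN hAM ha hA hdet hB1 hB2 hg1 hg2 he1 he2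
    by_cases hab : a ≤ b
    · by_cases hC : a * b - g ^ 2 ≤ a * c - e ^ 2
      · exact ternary_reduced a b c d e g ha hA hdet hB1 hB2 hg1 hg2 he1 he2 hab hC
      · have hABC : (a * b - g ^ 2) * (a * c - e ^ 2) - (a * d - e * g) ^ 2 = a := by
          linear_combination a * hdet
        have hCpos : 0 < a * c - e ^ 2 := by
          by_contra hcon
          nlinarith [sq_nonneg (a * d - e * g)]
        have := ihM (a * c - e ^ 2).toNat (by omega) a c b d g e haN (by omega) ha hCpos
          (by linear_combination hdet)
        intro x y z
        obtain ⟨p, q, r, h⟩ := this x z y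
        exact ⟨p, q, r, by rw [← h]; ring⟩
    · have hb : 0 < b := by
        by_contra hcon
        nlinarith [sq_nonneg g]
      have := ihN b.toNat (by omega) M b a c e d g (by omega) (by linarith) hb (by linarith)
          (by linear_combination hdet)
      intro x y z
      obtain ⟨p, q, r, h⟩ := this y x z
      exact ⟨p, q, r, by rw [← h]; ring⟩
  -- shift x by z
  have key2 : ∀ (a b c d e g : ℤ), a = N → a * b - g ^ 2 = M →
      0 < a → 0 < a * b - g ^ 2 →
      a * b * c + 2 * d * e * g - a * d ^ 2 - b * e ^ 2 - c * g ^ 2 = 1 →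
      -(a * b - g ^ 2) ≤ 2 * (a * d - e * g) →
      2 * (a * d - e * g) ≤ (a * b - g ^ 2) →
      -a ≤ 2 * g → 2 * g ≤ a → TernarySums a b c d e g := by
    intro a b c d e g haN hAM ha hA hdet hB1 hB2 hg1 hg2
    obtain ⟨k, hk1, hk2⟩ := exists_small_shift a e ha
    have := key a b (c + 2 * k * e + k ^ 2 * a) (d + k * g) (e + k * a) g haN hAM ha hA
      (by linear_combination hdet) (by linarith) (by linarith) hg1 hg2 hk1 hk2
    intro x y z
    obtain ⟨p, q, r, h⟩ := this (x - k * z) y z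
    exact ⟨p, q, r, by rw [← h]; ring⟩
  -- shift x by y
  have key3 : ∀ (a b c d e g : ℤ), a = N → a * b - g ^ 2 = M →
      0 < a → 0 < a * b - g ^ 2 →
      a * b * c + 2 * d * e * g - a * d ^ 2 - b * e ^ 2 - c * g ^ 2 = 1 →
      -(a * b - g ^ 2) ≤ 2 * (a * d - e * g) →
      2 * (a * d - e * g) ≤ (a * b - g ^ 2) → TernarySums a b c d e g := by
    intro a b c d e g haN hAM ha hA hdet hB1 hB2
    obtain ⟨k, hk1, hk2⟩ := exists_small_shift a g ha
    have := key2 a (b + 2 * k * g + k ^ 2 * a) c (d + k * e) e (g + k * a) haN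
      (by linarith) ha (by linarith)
      (by linear_combination hdet) (by linarith) (by linarith) hk1 hk2
    intro x y z
    obtain ⟨p, q, r, h⟩ := this (x - k * y) y z
    exact ⟨p, q, r, by rw [← h]; ring⟩
  -- shift y by z
  intro a b c d e g haN hAM ha hA hdet
  obtain ⟨k, hk1, hk2⟩ := exists_small_shift (a * b - g ^ 2) (a * d - e * g) hA
  have := key3 a b (c + 2 * k * d + k ^ 2 * b) (d + k * b) (e + k * g) g haN hAM ha hA
    (by linear_combination hdet) (by linarith) (by linarith)
  intro x y z
  obtain ⟨p, q, r, h⟩ := this x (y - k * z) z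
  exact ⟨p, q, r, by rw [← h]; ring⟩

open scoped NumberTheorySymbols in
lemma three_squares (n : ℕ) : ∃ p q r : ℤ, 8 * (n : ℤ) + 3 = p ^ 2 + q ^ 2 + r ^ 2 := by
  have hcop : Nat.Coprime (4 * n + 1) (32 * n + 12) := by
    have h1 : 32 * n + 12 = 4 + 8 * (4 * n + 1) := by ring
    rw [h1, Nat.coprime_add_mul_right_right]
    have : Nat.Coprime (4 * n + 1) (2 ^ 2) := by
      apply Nat.Coprime.pow_right
      rw [Nat.coprime_two_right]
      exact ⟨2 * n, by ring⟩
    exact this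
  obtain ⟨p, hpgt, hp, hmod⟩ :=
    Nat.forall_exists_prime_gt_and_modEq (4 * n + 1) (by omega) hcop
  obtain ⟨j, hj⟩ : ∃ j : ℕ, p = (32 * n + 12) * j + (4 * n + 1) := by
    have := (Nat.modEq_iff_dvd' hpgt.le).1 hmod.symm
    obtain ⟨j, hj⟩ := this
    exact ⟨j, by omega⟩
  have hp4 : p % 4 = 1 := by
    have : p = 4 * ((8 * n + 3) * j + n) + 1 := by rw [hj]; ring
    omega
  have hpodd : Odd p := Nat.odd_iff.2 (by omega)
  set b : ℕ := 8 * j + 1 with hb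
  have hbodd : Odd b := ⟨4 * j, by omega⟩
  have h2p : (2 * p : ℤ) = b * (8 * n + 3) - 1 := by
    rw [hj, hb]; push_cast; ring
  have : Fact p.Prime := ⟨hp⟩
  have hJ : J(-(b : ℤ) | p) = 1 := by
    rw [jacobiSym.neg _ hpodd, ZMod.χ₄_nat_one_mod_four hp4, one_mul,
      jacobiSym.quadratic_reciprocity_one_mod_four' hbodd hp4]
    have h2 : J(-2 | b) = 1 := by
      rw [jacobiSym.at_neg_two hbodd, ZMod.χ₈'_nat_eq_if_mod_eight]
      have h8 : b % 8 = 1 := by omega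
      have h9 : b % 2 = 1 := by omega
      simp [h8, h9]
    have h3 : J(-2 * (p : ℤ) | b) = 1 := by
      rw [← jacobiSym.one_left b]
      apply jacobiSym.mod_left'
      apply Int.emod_emod_of_dvd _ (dvd_refl _) |>.symm.trans
      have : -2 * (p : ℤ) = 1 + b * (-(8 * n + 3)) := by linarith
      rw [this, Int.add_mul_emod_self_left, Int.emod_emod_of_dvd _ (dvd_refl _)]
    rw [jacobiSym.mul_left, h2, one_mul] at h3
    exact h3
  obtain ⟨s, hs⟩ := ZMod.isSquare_of_jacobiSym_eq_one hJ
  obtain ⟨t, rfl⟩ : ∃ t : ℤ, (t : ZMod p) = s := ⟨s.valMinAbs, s.coe_valMinAbs⟩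
  have hdvd : (p : ℤ) ∣ t ^ 2 + b := by
    rw [← ZMod.intCast_zmod_eq_zero_iff_dvd] <;> try infer_instance
    push_cast at hs ⊢
    rw [sq, ← hs]; ring
  -- make it odd
  obtain ⟨g, a, hga⟩ : ∃ g a : ℤ, g ^ 2 + b = 2 * p * a := by
    obtain ⟨w, hw⟩ := hdvd
    have hpz : (p : ℤ) % 2 = 1 := by omega
    obtain ⟨p', hp'⟩ : ∃ p' : ℤ, (p : ℤ) = 2 * p' + 1 := ⟨p / 2, by omega⟩
    have hbz : (b : ℤ) = 2 * (4 * j) + 1 := by rw [hb]; push_cast; ring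
    rcases Int.even_or_odd' t with ⟨u, hu | hu⟩
    · have he : Even ((p : ℤ) * (w + 2 * t + p)) := by
        refine ⟨2 * u ^ 2 + 4 * j + 1 + 2 * u * p + 2 * p' ^ 2 + 2 * p', ?_⟩
        have : (p : ℤ) * (w + 2 * t + p) = t ^ 2 + b + 2 * t * p + p ^ 2 := by rw [hw]; ring
        rw [this, hu, hbz, hp']; ring
      rcases Int.even_mul.1 he with h | ⟨v, hv⟩
      · exact absurd (Int.even_iff.1 h) (by omega)
      · exact ⟨t + p, v, by linear_combination hw + p * hv⟩
    · have he : Even ((p : ℤ) * w) := by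
        rw [← hw, hu, hbz]
        exact ⟨2 * u ^ 2 + 2 * u + 4 * j + 1, by ring⟩
      rcases Int.even_mul.1 he with h | ⟨v, hv⟩
      · exact absurd (Int.even_iff.1 h) (by omega)
      · exact ⟨t, v, by linear_combination hw + p * hv⟩
  have hbpos : (0 : ℤ) < b := by rw [hb]; positivity
  have hppos : (0 : ℤ) < p := by exact_mod_cast hp.pos
  have hapos : 0 < a := by
    by_contra hcon
    nlinarith [sq_nonneg g]
  have hA : a * (2 * p) - g ^ 2 = b := by linarith
  have := ternary_unimodular a.toNat b a (2 * p) (8 * n + 3) 0 1 g (by omega) hA hapos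
    (by rw [hA]; exact hbpos) (by linear_combination (8 * (n : ℤ) + 3) * hA - h2p)
  obtain ⟨x, y, z, h⟩ := this 0 0 1
  exact ⟨x, y, z, by rw [← h]; ring⟩

lemma sq_mod_three (a : ℤ) : (a % 3 = 0 ∧ a ^ 2 % 3 = 0) ∨ (a % 3 ≠ 0 ∧ a ^ 2 % 3 = 1) := by
  have : a % 3 = 0 ∨ a % 3 = 1 ∨ a % 3 = 2 := by omega
  rcases this with h | h | h <;> simp [pow_two, Int.mul_emod, h]

lemma three_squares_primitive (n : ℕ) : ∃ p q r : ℤ, 8 * (n : ℤ) + 3 = p ^ 2 + q ^ 2 + r ^ 2 ∧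
    ¬ (p % 3 = 0 ∧ q % 3 = 0 ∧ r % 3 = 0) := by
  induction n using Nat.strong_induction_on with
  | _ n ih =>
  by_cases h9 : (8 * n + 3) % 9 = 0
  · obtain ⟨m, hm⟩ : ∃ m : ℕ, 8 * n + 3 = 9 * (8 * m + 3) := ⟨n / 9, by omega⟩
    obtain ⟨p, q, r, h, hnd⟩ := ih m (by omega)
    have hz : 8 * (n : ℤ) + 3 = 9 * (8 * m + 3) := by exact_mod_cast hm
    have lift : ∀ p q r : ℤ, 8 * (m : ℤ) + 3 = p ^ 2 + q ^ 2 + r ^ 2 → (p + q + r) % 3 ≠ 0 →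
        ∃ p q r : ℤ, 8 * (n : ℤ) + 3 = p ^ 2 + q ^ 2 + r ^ 2 ∧
          ¬ (p % 3 = 0 ∧ q % 3 = 0 ∧ r % 3 = 0) := by
      intro p q r h hs
      exact ⟨3 * p - 2 * (p + q + r), 3 * q - 2 * (p + q + r), 3 * r - 2 * (p + q + r),
        by rw [hz, h]; ring, by omega⟩
    by_cases h1 : (p + q + r) % 3 = 0
    · by_cases h2 : (-p + q + r) % 3 = 0
      · by_cases h3 : (p + -q + r) % 3 = 0
        · exact absurd ⟨by omega, by omega, by omega⟩ hnd
        · exact lift p (-q) r (by rw [h]; ring) h3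
      · exact lift (-p) q r (by rw [h]; ring) h2
    · exact lift p q r h h1
  · obtain ⟨p, q, r, h⟩ := three_squares n
    refine ⟨p, q, r, h, ?_⟩
    rintro ⟨h1, h2, h3⟩
    obtain ⟨u, rfl⟩ := Int.dvd_of_emod_eq_zero h1
    obtain ⟨v, rfl⟩ := Int.dvd_of_emod_eq_zero h2
    obtain ⟨w, rfl⟩ := Int.dvd_of_emod_eq_zero h3
    have : 8 * (n : ℤ) + 3 = 9 * (u ^ 2 + v ^ 2 + w ^ 2) := by rw [h]; ring
    omega

lemma sq_mod_eight (a : ℤ) : (a % 2 = 1 ∧ a ^ 2 % 8 = 1) ∨ (a % 2 = 0 ∧ a ^ 2 % 4 = 0) := by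
  have : a % 8 = 0 ∨ a % 8 = 1 ∨ a % 8 = 2 ∨ a % 8 = 3 ∨ a % 8 = 4 ∨ a % 8 = 5 ∨ a % 8 = 6 ∨
    a % 8 = 7 := by omega
  rcases Int.even_or_odd' a with ⟨u, hu | hu⟩
  · right
    refine ⟨by omega, ?_⟩
    have : a ^ 2 = 4 * u ^ 2 := by rw [hu]; ring
    omega
  · left
    refine ⟨by omega, ?_⟩
    rcases this with h | h | h | h | h | h | h | h <;> first | omega | simp [pow_two, Int.mul_emod, h]

lemma gcd_six (x : ℤ) (h2 : x % 2 = 1) (h3 : x % 3 ≠ 0) : Int.gcd x 6 = 1 := by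
  rw [← Int.gcd_emod]
  have : x % 6 = 1 ∨ x % 6 = 5 := by omega
  rcases this with h | h <;> rw [h] <;> rfl

lemma sign_four (a : ℤ) (h : a % 2 = 1) : ∃ b : ℤ, b % 4 = 1 ∧ b ^ 2 = a ^ 2 ∧
    (b % 3 = 0 ↔ a % 3 = 0) := by
  by_cases h4 : a % 4 = 1
  · exact ⟨a, h4, rfl, Iff.rfl⟩
  · exact ⟨-a, by omega, by ring, by omega⟩

theorem rep_24n_add_nine (n : ℕ) :
    ∃ x y z : ℤ, Int.gcd x 6 = 1 ∧ Int.gcd y 6 = 1 ∧ Int.gcd z 6 = 1 ∧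
      24 * (n : ℤ) + 9 = x ^ 2 + 2 * y ^ 2 + 6 * z ^ 2 := by
  obtain ⟨p, q, r, h, hnd⟩ := three_squares_primitive n
  have hodd : p % 2 = 1 ∧ q % 2 = 1 ∧ r % 2 = 1 := by
    rcases sq_mod_eight p with ⟨h1, h2⟩ | ⟨h1, h2⟩ <;>
    rcases sq_mod_eight q with ⟨h3, h4⟩ | ⟨h3, h4⟩ <;>
    rcases sq_mod_eight r with ⟨h5, h6⟩ | ⟨h5, h6⟩ <;> omega
  obtain ⟨a, ha4, ha, ha3⟩ := sign_four p hodd.1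
  obtain ⟨b, hb4, hb, hb3⟩ := sign_four q hodd.2.1
  obtain ⟨c, hc4, hc, hc3⟩ := sign_four r hodd.2.2
  rw [← ha, ← hb, ← hc] at h
  rw [← ha3, ← hb3, ← hc3] at hnd
  have main : ∀ a b c : ℤ, 8 * (n : ℤ) + 3 = a ^ 2 + b ^ 2 + c ^ 2 → a % 4 = 1 → b % 4 = 1 →
      c % 4 = 1 → (b + c) % 3 ≠ 0 → ¬ (a % 3 = 0 ∧ (b - c) % 3 = 0) →
      ∃ x y z : ℤ, Int.gcd x 6 = 1 ∧ Int.gcd y 6 = 1 ∧ Int.gcd z 6 = 1 ∧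
      24 * (n : ℤ) + 9 = x ^ 2 + 2 * y ^ 2 + 6 * z ^ 2 := by
    intro a b c h ha hb hc hz hv
    obtain ⟨z, hz'⟩ : ∃ z, b + c = 2 * z := ⟨(b + c) / 2, by omega⟩
    obtain ⟨v, hv'⟩ : ∃ v, b - c = 2 * v := ⟨(b - c) / 2, by omega⟩
    have hb' : b = z + v := by omega
    have hc' : c = z - v := by omega
    have h24 : 24 * (n : ℤ) + 9 = 3 * (a ^ 2 + 2 * v ^ 2 + 2 * z ^ 2) := by
      have : 24 * (n : ℤ) + 9 = 3 * (8 * n + 3) := by ring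
      rw [this, h, hb', hc']; ring
    by_cases hav : (a + v) % 3 = 0
    · exact ⟨a + 2 * v, a - v, z, gcd_six _ (by omega) (by omega), gcd_six _ (by omega) (by omega),
        gcd_six _ (by omega) (by omega), by rw [h24]; ring⟩
    · exact ⟨a - 2 * v, a + v, z, gcd_six _ (by omega) (by omega), gcd_six _ (by omega) (by omega),
        gcd_six _ (by omega) (by omega), by rw [h24]; ring⟩
  by_cases h1 : (b + c) % 3 ≠ 0 ∧ ¬ (a % 3 = 0 ∧ (b - c) % 3 = 0)
  · exact main a b c h ha4 hb4 hc4 h1.1 h1.2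
  by_cases h2 : (a + c) % 3 ≠ 0 ∧ ¬ (b % 3 = 0 ∧ (a - c) % 3 = 0)
  · exact main b a c (by rw [h]; ring) hb4 ha4 hc4 h2.1 h2.2
  by_cases h3 : (b + a) % 3 ≠ 0 ∧ ¬ (c % 3 = 0 ∧ (b - a) % 3 = 0)
  · exact main c b a (by rw [h]; ring) hc4 hb4 ha4 h3.1 h3.2
  exfalso
  omega
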